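/- arXiv:1112.3782 — 3 statements merged into one kernel-verified Lean document; each statement's English description precedes it below -/
import Mathlib

section
/- The ranking map hfseq2nat : HFSeq → ℕ is a bijection; that is, every natural number is the rank of exactly one hereditarily finite sequence. -/
/-!
The rank satisfies `rank (node []) = 0` and
`rank (node (t :: ts)) = 2 ^ rank t * (2 * rank (node ts) + 1)`. Every positive integer is
`2 ^ x * (2 * m + 1)` for exactly one pair `(x, m)`, and both `x` and `m` are smaller than that
integer. Existence of the pair gives surjectivity by strong induction on the number; its uniqueness
(`two_pow_mul_odd_inj`) gives injectivity by induction on the tree, splitting `node (t :: ts)` into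
its first child `t` and the smaller tree `node ts`.
-/

inductive HFSeq where
  | node : List HFSeq → HFSeq

open HFSeq

def list2nat : List ℕ → ℕ
  | [] => 0
  | x :: xs => 2 ^ x * (2 * list2nat xs + 1)

/-- The rank of a hereditarily finite sequence:
    `hfseq2nat (node ts) = list2nat (ts.map hfseq2nat)`. -/
def hfseq2nat : HFSeq → ℕ
  | node ts => list2nat (ts.attach.map fun x => hfseq2nat x.1)
  decreasing_by
    have h := List.sizeOf_lt_of_mem x.2
    simp only [HFSeq.node.sizeOf_spec]
    omega

theorem hfseq2nat_nil : hfseq2nat (node []) = 0 := by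
  simp [hfseq2nat, list2nat]

theorem hfseq2nat_cons (t : HFSeq) (ts : List HFSeq) :
    hfseq2nat (node (t :: ts)) = 2 ^ hfseq2nat t * (2 * hfseq2nat (node ts) + 1) := by
  simp [hfseq2nat, list2nat]

theorem two_pow_mul_odd_inj : ∀ {x y a b : ℕ},
    2 ^ x * (2 * a + 1) = 2 ^ y * (2 * b + 1) → x = y ∧ a = b
  | 0, 0, a, b, h => by omega
  | 0, y + 1, a, b, h => by
    rw [pow_succ', mul_assoc] at h
    omega
  | x + 1, 0, a, b, h => by
    rw [pow_succ', mul_assoc] at h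
    omega
  | x + 1, y + 1, a, b, h => by
    rw [pow_succ', pow_succ', mul_assoc, mul_assoc] at h
    have := two_pow_mul_odd_inj (Nat.eq_of_mul_eq_mul_left two_pos h)
    omega

theorem hfseq2nat_inj : ∀ s t : HFSeq, hfseq2nat s = hfseq2nat t → s = t
  | node [], node [], _ => rfl
  | node [], node (t :: ts), h => by
    rw [hfseq2nat_nil, hfseq2nat_cons] at h
    exact absurd h.symm (by positivity)
  | node (s :: ss), node [], h => by
    rw [hfseq2nat_nil, hfseq2nat_cons] at h
    exact absurd h (by positivity)
  | node (s :: ss), node (t :: ts), h => by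
    rw [hfseq2nat_cons, hfseq2nat_cons] at h
    obtain ⟨h₁, h₂⟩ := two_pow_mul_odd_inj h
    have e₁ := hfseq2nat_inj s t h₁
    have e₂ := hfseq2nat_inj (node ss) (node ts) h₂
    rw [e₁, node.inj e₂]

theorem hfseq2nat_surj (n : ℕ) : ∃ t, hfseq2nat t = n := by
  induction n using Nat.strong_induction_on with
  | _ n ih =>
    rcases Nat.eq_zero_or_pos n with rfl | hn
    · exact ⟨node [], hfseq2nat_nil⟩
    · obtain ⟨x, k, ⟨m, rfl⟩, rfl⟩ := Nat.exists_eq_two_pow_mul_odd hn.ne'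
      have hx : x < 2 ^ x := Nat.lt_two_pow_self
      obtain ⟨t, ht⟩ := ih x (by nlinarith)
      obtain ⟨⟨ts⟩, hts⟩ := ih m (by nlinarith)
      exact ⟨node (t :: ts), by rw [hfseq2nat_cons, ht, hts]⟩

/-- The ranking map `hfseq2nat : HFSeq → ℕ` is a bijection; every natural number
is the rank of exactly one hereditarily finite sequence. -/
theorem hfseq2nat_bijective : Function.Bijective hfseq2nat := by
  exact ⟨fun s t h => hfseq2nat_inj s t h, hfseq2nat_surj⟩
end

section
/- For any two distinct hereditarily finite sequences t1 and t2, pars t1 is neither a prefix nor a suffix of pars t2; that is, the codes {pars t : t ∈ HFSeq} form a fix-free (bifix) code: both a prefix code and a suffix code. -/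
open HFSeq

/-- balanced-parenthesis code of a hereditarily finite sequence:
    `pars (node ts) = false :: (ts.flatMap pars) ++ [true]` -/
def pars : HFSeq → List Bool
  | node ts => false :: ((ts.attach.flatMap fun x => pars x.1) ++ [true])
  decreasing_by
    have h := List.sizeOf_lt_of_mem x.2
    simp only [HFSeq.node.sizeOf_spec]
    omega

theorem pars_node (ts : List HFSeq) :
    pars (node ts) = false :: (ts.flatMap pars ++ [true]) := by
  rw [pars]
  simp [List.flatMap]

/-- Left-to-right parsing is deterministic. The bound `n` on the code length drives the induction:
the children of the first tree and the forest of the other trees both have shorter codes. -/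
theorem forest_parse_left (n : ℕ) : ∀ (ts us : List HFSeq) (r1 r2 : List Bool),
    (ts.flatMap pars).length ≤ n →
    ts.flatMap pars ++ true :: r1 = us.flatMap pars ++ true :: r2 → ts = us ∧ r1 = r2 := by
  induction n with
  | zero =>
    rintro (_ | ⟨⟨a⟩, ts⟩) (_ | ⟨⟨b⟩, us⟩) r1 r2 hn h <;> simp_all [pars_node]
  | succ n ih =>
    rintro (_ | ⟨⟨a⟩, ts⟩) (_ | ⟨⟨b⟩, us⟩) r1 r2 hn h
    · simpa using h
    · simp [pars_node] at h
    · simp [pars_node] at h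
    · simp only [List.flatMap_cons, pars_node, List.cons_append, List.append_assoc,
        List.cons.injEq, true_and, List.nil_append, List.length_cons, List.length_append] at h hn
      obtain ⟨rfl, h'⟩ := ih a b _ _ (by omega) h
      obtain ⟨rfl, rfl⟩ := ih ts us _ _ (by omega) h'
      exact ⟨rfl, rfl⟩

/-- Right-to-left parsing is deterministic; the induction peels off the last tree. -/
theorem forest_parse_right (n : ℕ) : ∀ (ts us : List HFSeq) (r1 r2 : List Bool),
    (ts.flatMap pars).length ≤ n →
    r1 ++ false :: ts.flatMap pars = r2 ++ false :: us.flatMap pars → ts = us ∧ r1 = r2 := by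
  induction n with
  | zero =>
    intro ts us r1 r2 hn h
    rcases List.eq_nil_or_concat ts with rfl | ⟨ts, ⟨a⟩, rfl⟩
    · rcases List.eq_nil_or_concat us with rfl | ⟨us, ⟨b⟩, rfl⟩
      · simpa using h
      · have := congrArg List.getLast? h
        simp [pars_node, List.getLast?_append, List.getLast?_cons] at this
    · simp [pars_node] at hn
  | succ n ih =>
    intro ts us r1 r2 hn h
    rcases List.eq_nil_or_concat ts with rfl | ⟨ts, ⟨a⟩, rfl⟩ <;>
    rcases List.eq_nil_or_concat us with rfl | ⟨us, ⟨b⟩, rfl⟩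
    · simpa using h
    · have := congrArg List.getLast? h
      simp [pars_node, List.getLast?_append, List.getLast?_cons] at this
    · have := congrArg List.getLast? h
      simp [pars_node, List.getLast?_append, List.getLast?_cons] at this
    · have h1 : (r1 ++ false :: ts.flatMap pars) ++ false :: a.flatMap pars
          = (r2 ++ false :: us.flatMap pars) ++ false :: b.flatMap pars := by
        apply List.append_cancel_right (bs := [true])
        simpa [pars_node] using h
      simp [pars_node, -List.length_flatMap] at hn
      obtain ⟨rfl, h'⟩ := ih a b _ _ (by omega) h1
      obtain ⟨rfl, rfl⟩ := ih ts us _ _ (by omega) h'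
      exact ⟨rfl, rfl⟩

/-- The codes `pars t` form a fix-free (bifix) code: for distinct trees `t1`, `t2`,
`pars t1` is neither a prefix nor a suffix of `pars t2`. -/
theorem pars_fix_free (t1 t2 : HFSeq) (h : t1 ≠ t2) :
    ¬ (pars t1 <+: pars t2) ∧ ¬ (pars t1 <:+ pars t2) := by
  obtain ⟨a⟩ := t1
  obtain ⟨b⟩ := t2
  constructor
  · rintro ⟨r, hr⟩
    have h1 : a.flatMap pars ++ true :: r = b.flatMap pars ++ true :: [] := by
      simpa [pars_node] using hr
    exact h (congrArg node (forest_parse_left _ a b _ _ le_rfl h1).1)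
  · rintro ⟨r, hr⟩
    have h1 : r ++ false :: a.flatMap pars = [] ++ false :: b.flatMap pars := by
      apply List.append_cancel_right (bs := [true])
      simpa [pars_node] using hr
    exact h (congrArg node (forest_parse_right _ a b _ _ le_rfl h1).1)
end

section
/- Kraft's inequality holds for the balanced parenthesis codes of hereditarily finite sequences: the family t ↦ (1/2 : ℝ) ^ (pars t).length, indexed by all hereditarily finite sequences t, is summable, and ∑' (t : HFSeq), (1/2 : ℝ) ^ (pars t).length ≤ 1. -/
open HFSeq

/-- Self-delimitation of `pars`, proved by mutual induction together with the analogous fact for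
lists of codewords terminated by a closing parenthesis. -/
theorem pars_append_inj (t : HFSeq) : ∀ (t' : HFSeq) (r r' : List Bool),
    pars t ++ r = pars t' ++ r' → t = t' ∧ r = r' := by
  refine HFSeq.rec
    (motive_1 := fun t => ∀ (t' : HFSeq) (r r' : List Bool),
      pars t ++ r = pars t' ++ r' → t = t' ∧ r = r')
    (motive_2 := fun ts => ∀ (ts' : List HFSeq) (r r' : List Bool),
      ts.flatMap pars ++ true :: r = ts'.flatMap pars ++ true :: r' → ts = ts' ∧ r = r')
    ?_ ?_ ?_ t
  · rintro ts ih ⟨ts'⟩ r r' h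
    simp only [pars_node, List.cons_append, List.append_assoc, List.nil_append,
      List.cons.injEq, true_and] at h
    simpa using ih ts' r r' h
  · rintro (_ | ⟨⟨us⟩, ts'⟩) r r' h
    · simpa using h
    · simp [pars_node] at h
  · rintro t ts iht ihts (_ | ⟨t', ts'⟩) r r' h
    · cases t
      simp [pars_node] at h
    · simp only [List.flatMap_cons, List.append_assoc] at h
      obtain ⟨rfl, htail⟩ := iht _ _ _ h
      obtain ⟨rfl, hr⟩ := ihts _ _ _ htail
      exact ⟨rfl, hr⟩

theorem pars_injective : Function.Injective pars := fun t t' h =>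
  (pars_append_inj t t' [] [] (by rw [h])).1

theorem uniquelyDecodable_range_pars :
    InformationTheory.UniquelyDecodable (Set.range pars) := by
  intro L₁
  induction L₁ with
  | nil =>
    rintro (_ | ⟨w, L₂⟩) _ h₂ h
    · rfl
    · obtain ⟨⟨us⟩, rfl⟩ := h₂ w (by simp)
      simp [pars_node] at h
  | cons v L₁ ih =>
    rintro (_ | ⟨w, L₂⟩) h₁ h₂ h
    · obtain ⟨⟨us⟩, rfl⟩ := h₁ v (by simp)
      simp [pars_node] at h
    · obtain ⟨t, rfl⟩ := h₁ v (by simp)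
      obtain ⟨t', rfl⟩ := h₂ w (by simp)
      obtain ⟨rfl, htail⟩ := pars_append_inj _ _ _ _ (by simpa using h)
      rw [ih L₂ (fun w hw => h₁ w (by simp [hw])) (fun w hw => h₂ w (by simp [hw])) htail]

theorem sum_pars_le_one (s : Finset HFSeq) :
    ∑ t ∈ s, ((1 : ℝ) / 2) ^ (pars t).length ≤ 1 := by
  have hud : InformationTheory.UniquelyDecodable
      ((s.map ⟨pars, pars_injective⟩ : Finset (List Bool)) : Set (List Bool)) := by
    have hsub : ∀ w ∈ s.map ⟨pars, pars_injective⟩, w ∈ Set.range pars := by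
      intro w hw
      obtain ⟨t, -, rfl⟩ := Finset.mem_map.1 hw
      exact ⟨t, rfl⟩
    exact fun L₁ L₂ h₁ h₂ h => uniquelyDecodable_range_pars L₁ L₂
      (fun w hw => hsub w (h₁ w hw)) (fun w hw => hsub w (h₂ w hw)) h
  simpa using InformationTheory.kraft_mcmillan_inequality hud

/-- Kraft's inequality for the balanced parenthesis codes of hereditarily finite
sequences: the family `t ↦ (1/2) ^ (pars t).length` is summable and its sum
is at most `1`. -/
theorem pars_kraft_inequality :
    Summable (fun t : HFSeq => ((1 : ℝ) / 2) ^ (pars t).length) ∧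
    ∑' t : HFSeq, ((1 : ℝ) / 2) ^ (pars t).length ≤ 1 := by
  have hs : Summable (fun t : HFSeq => ((1 : ℝ) / 2) ^ (pars t).length) :=
    summable_of_sum_le (fun t => by positivity) sum_pars_le_one
  exact ⟨hs, hs.tsum_le_of_sum_le sum_pars_le_one⟩
end
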